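/- Let Z_1, …, Z_{N−1+M} be independent real-valued random variables, each with the same atomless Borel probability law, fix an integer k with 1 ≤ k ≤ N − 1, let R denote the k-th smallest element of the multiset {Z_1, …, Z_{N−1}}, and let C = #{j ∈ {1, …, M} : Z_{N−1+j} ≤ R}. Then for every integer j with 0 ≤ j ≤ M, P(C = j) = C(M, j) · B(k + j, M − j + N − k) / B(k, N − k), where C(M, j) is the binomial coefficient and B is the Beta function; that is, C follows the Beta-Binomial(M, k, N − k) distribution. -/

import Mathlib

open MeasureTheory ProbabilityTheory Finset

/-- The `k`-th smallest element of a multiset of real numbers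
(the `k`-th entry of the multiset sorted in nondecreasing order). -/
noncomputable def kthSmallest (s : Multiset ℝ) (k : ℕ) : ℝ :=
  (Multiset.sort s (· ≤ ·)).getD (k - 1) 0

/-- The Beta function `B(x, y) = ∫₀¹ t^(x-1) (1-t)^(y-1) dt`. -/
noncomputable def Beta (x y : ℝ) : ℝ :=
  ∫ t in (0:ℝ)..1, t ^ (x - 1) * (1 - t) ^ (y - 1)


/-- indices strictly below index `i`. -/
noncomputable def belowSet {ι : Type*} [Fintype ι] (x : ι → ℝ) (i : ι) : Finset ι :=
  Finset.univ.filter (fun l => x l < x i)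

/-- no ties, and the indices below `i` are exactly `S`. -/
def rankEvent {ι : Type*} [Fintype ι] (i : ι) (S : Finset ι) : Set (ι → ℝ) :=
  {x | Function.Injective x ∧ belowSet x i = S}

lemma Beta_nat (a b : ℕ) :
    Beta ((a : ℝ) + 1) ((b : ℝ) + 1) = (a.factorial * b.factorial : ℝ) / (a + b + 1).factorial := by
  have h := beta_eq_betaIntegralReal ((a : ℝ) + 1) ((b : ℝ) + 1) (by positivity) (by positivity)
  have h2 : (Complex.betaIntegral (((a : ℝ) + 1 : ℝ) : ℂ) (((b : ℝ) + 1 : ℝ) : ℂ)).re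
      = Beta ((a : ℝ) + 1) ((b : ℝ) + 1) := by
    have : Complex.betaIntegral (((a : ℝ) + 1 : ℝ) : ℂ) (((b : ℝ) + 1 : ℝ) : ℂ)
      = ((Beta ((a : ℝ) + 1) ((b : ℝ) + 1) : ℝ) : ℂ) := by
      rw [Complex.betaIntegral, Beta, ← intervalIntegral.integral_ofReal]
      apply intervalIntegral.integral_congr
      intro t ht
      simp
    rw [this, Complex.ofReal_re]
  rw [← h2, ← h, beta]
  have e : (a : ℝ) + 1 + (b + 1) = ((a + b + 1 : ℕ) : ℝ) + 1 := by push_cast; ring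
  rw [e, Real.Gamma_nat_eq_factorial, Real.Gamma_nat_eq_factorial, Real.Gamma_nat_eq_factorial]

lemma belowSet_card_inj {ι : Type*} [Fintype ι] {x : ι → ℝ} (hx : Function.Injective x)
    {i j : ι} (h : (belowSet x i).card = (belowSet x j).card) : i = j := by
  have key : ∀ i j : ι, x i < x j → (belowSet x i).card < (belowSet x j).card := by
    intro i j hij
    apply Finset.card_lt_card
    rw [Finset.ssubset_iff_of_subset]
    · exact ⟨i, by simp [belowSet, hij], by simp [belowSet]⟩
    · intro l hl
      simp only [belowSet, mem_filter, mem_univ, true_and] at *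
      exact hl.trans hij
  rcases lt_trichotomy (x i) (x j) with h1 | h1 | h1
  · have := key _ _ h1; omega
  · exact hx h1
  · have := key _ _ h1; omega

lemma exists_belowSet_card {ι : Type*} [Fintype ι] {x : ι → ℝ} (hx : Function.Injective x)
    {a : ℕ} (ha : a < Fintype.card ι) : ∃ i, (belowSet x i).card = a := by
  have hlt : ∀ i, (belowSet x i).card < Fintype.card ι := by
    intro i
    apply Finset.card_lt_univ_of_notMem (x := i)
    simp [belowSet]
  let f : ι → Fin (Fintype.card ι) := fun i => ⟨(belowSet x i).card, hlt i⟩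
  have hf : Function.Injective f := by
    intro i j h
    exact belowSet_card_inj hx (by simpa [f] using h)
  have hb : Function.Bijective f := (Fintype.bijective_iff_injective_and_card f).2 ⟨hf, by simp⟩
  obtain ⟨i, hi⟩ := hb.2 ⟨a, ha⟩
  exact ⟨i, by simpa [f] using hi⟩

lemma kthSmallest_spec {n k : ℕ} (y : Fin n → ℝ) (hy : Function.Injective y) (hk1 : 1 ≤ k)
    (hk : k ≤ n) : ∃ i, kthSmallest ((List.ofFn y : List ℝ) : Multiset ℝ) k = y i ∧
      (belowSet y i).card = k - 1 := by
  set σ := Tuple.sort y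
  have hmono : StrictMono (y ∘ σ) :=
    (Tuple.monotone_sort y).strictMono_of_injective (hy.comp σ.injective)
  have hsort : Multiset.sort ((List.ofFn y : List ℝ) : Multiset ℝ) (· ≤ ·) = List.ofFn (y ∘ σ) := by
    apply List.Perm.eq_of_pairwise' (r := (· ≤ ·))
    · exact Multiset.pairwise_sort _ _
    · rw [List.pairwise_ofFn]
      intro i j hij
      exact (hmono hij).le
    · rw [← Multiset.coe_eq_coe, Multiset.sort_eq, Multiset.coe_eq_coe]
      exact (σ.ofFn_comp_perm y).symm
  refine ⟨σ ⟨k - 1, by omega⟩, ?_, ?_⟩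
  · rw [kthSmallest, hsort]
    rw [List.getD_eq_getElem _ _ (by simp; omega)]
    simp
  · have : belowSet y (σ ⟨k - 1, by omega⟩)
        = (Finset.Iio (⟨k - 1, by omega⟩ : Fin n)).map σ.toEmbedding := by
      ext l
      obtain ⟨m, rfl⟩ := σ.surjective l
      simp only [belowSet, mem_filter, mem_univ, true_and, mem_map_equiv, Equiv.symm_apply_apply,
        Finset.mem_Iio]
      exact hmono.lt_iff_lt (a := m)
    rw [this, Finset.card_map, Fin.card_Iio]

lemma belowSet_sum {n M : ℕ} (x : Fin n ⊕ Fin M → ℝ) (i : Fin n) :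
    belowSet x (Sum.inl i) = (belowSet (x ∘ Sum.inl) i).disjSum
      (Finset.univ.filter (fun l => x (Sum.inr l) < x (Sum.inl i))) := by
  ext l
  cases l <;> simp [belowSet]

/-- the index set of favourable configurations. -/
noncomputable def goodSet (n M k j : ℕ) :
    Finset (Σ _ : Fin n, Finset (Fin n) × Finset (Fin M)) :=
  (Finset.univ : Finset (Fin n)).sigma fun i =>
    Finset.powersetCard (k - 1) (Finset.univ.erase i) ×ˢ Finset.powersetCard j Finset.univ

lemma goodSet_card (n M k j : ℕ) :
    (goodSet n M k j).card = n * ((n - 1).choose (k - 1) * M.choose j) := by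
  simp [goodSet, Finset.card_sigma]

lemma count_eq_iff {n M k j : ℕ} (hk1 : 1 ≤ k) (hk : k ≤ n) (x : Fin n ⊕ Fin M → ℝ)
    (hx : Function.Injective x) :
    (Finset.univ.filter (fun j' : Fin M => x (Sum.inr j') ≤
      kthSmallest ((List.ofFn (fun i : Fin n => x (Sum.inl i)) : List ℝ) : Multiset ℝ) k)).card = j
    ↔ ∃ p ∈ goodSet n M k j, belowSet x (Sum.inl p.1) = p.2.1.disjSum p.2.2 := by
  have hy : Function.Injective (x ∘ Sum.inl) := hx.comp Sum.inl_injective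
  obtain ⟨i, hi, hic⟩ := kthSmallest_spec (x ∘ Sum.inl) hy hk1 hk
  have hi' : kthSmallest ((List.ofFn (fun i : Fin n => x (Sum.inl i)) : List ℝ) : Multiset ℝ) k
    = x (Sum.inl i) := hi
  rw [hi']
  have hle : ∀ l : Fin M, x (Sum.inr l) ≤ x (Sum.inl i) ↔ x (Sum.inr l) < x (Sum.inl i) := by
    intro l
    rw [le_iff_lt_or_eq, or_iff_left]
    intro h
    exact absurd (hx h) (by simp)
  simp only [hle]
  constructor
  · intro h
    refine ⟨⟨i, belowSet (x ∘ Sum.inl) i, _⟩, ?_, belowSet_sum x i⟩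
    simp only [goodSet, mem_sigma, mem_univ, true_and, mem_product, mem_powersetCard,
      subset_univ]
    refine ⟨⟨?_, hic⟩, h⟩
    intro l hl
    simp only [belowSet, mem_filter, mem_univ, true_and, mem_erase, and_true] at *
    rintro rfl
    exact lt_irrefl _ hl
  · rintro ⟨⟨i', A, B⟩, hp, hb⟩
    simp only [goodSet, mem_sigma, mem_univ, true_and, mem_product, mem_powersetCard,
      subset_univ] at hp
    simp only at hb
    rw [belowSet_sum] at hb
    obtain ⟨h1, h2⟩ := Finset.disjSum_inj.1 hb
    have : i' = i := belowSet_card_inj hy (by rw [hic, h1, hp.1.2])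
    subst this
    rw [h2, hp.2]

lemma measurableSet_inj {ι : Type*} [Fintype ι] :
    MeasurableSet {x : ι → ℝ | Function.Injective x} := by
  have : {x : ι → ℝ | Function.Injective x} =
      ⋂ i, ⋂ j, {x : ι → ℝ | x i = x j → i = j} := by
    ext x; simp [Function.Injective]
  rw [this]
  refine MeasurableSet.iInter fun i => MeasurableSet.iInter fun j => ?_
  by_cases hij : i = j
  · simp [hij]
  · have : {x : ι → ℝ | x i = x j → i = j} = {x | x i = x j}ᶜ := by
      ext x; simp [hij]
    rw [this]
    exact (measurableSet_eq_fun (measurable_pi_apply i) (measurable_pi_apply j)).compl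

lemma measurableSet_rankEvent {ι : Type*} [Fintype ι] (i : ι) (S : Finset ι) :
    MeasurableSet (rankEvent i S) := by
  have : rankEvent i S = {x : ι → ℝ | Function.Injective x} ∩
      ⋂ l, {x : ι → ℝ | x l < x i ↔ l ∈ S} := by
    ext x; simp [rankEvent, belowSet, Finset.ext_iff]
  rw [this]
  refine measurableSet_inj.inter (MeasurableSet.iInter fun l => ?_)
  have hm : MeasurableSet {x : ι → ℝ | x l < x i} :=
    measurableSet_lt (measurable_pi_apply l) (measurable_pi_apply i)
  by_cases h : l ∈ S
  · simpa [h] using hm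
  · have e : {x : ι → ℝ | x l < x i ↔ l ∈ S} = {x : ι → ℝ | x l < x i}ᶜ := by
      ext x; simp [h]
    rw [e]
    exact hm.compl

lemma rankEvent_disjoint {ι : Type*} [Fintype ι] {i j : ι} {S T : Finset ι}
    (hc : S.card = T.card) (hne : ¬ (i = j ∧ S = T)) :
    Disjoint (rankEvent i S) (rankEvent j T) := by
  rw [Set.disjoint_left]
  rintro x ⟨hx, h1⟩ ⟨-, h2⟩
  apply hne
  have : i = j := belowSet_card_inj hx (by rw [h1, h2, hc])
  subst this
  exact ⟨rfl, h1.symm.trans h2⟩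

lemma exists_perm {ι : Type*} [Fintype ι] {i j : ι} {S T : Finset ι}
    (hc : S.card = T.card) (hi : i ∉ S) (hj : j ∉ T) :
    ∃ σ : Equiv.Perm ι, σ i = j ∧ ∀ l, σ l ∈ T ↔ l ∈ S := by
  classical
  obtain ⟨σ, hσ⟩ := Equiv.Perm.exists_map_finset_eq S T hc
  have h1 : ∀ l, σ l ∈ T ↔ l ∈ S := by
    intro l; rw [← hσ]; simp
  have hi' : σ i ∉ T := by rwa [h1]
  refine ⟨σ.trans (Equiv.swap (σ i) j), by simp, ?_⟩
  intro l
  rw [← h1 l, Equiv.trans_apply]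
  by_cases ha : σ l = σ i
  · rw [ha, Equiv.swap_apply_left]; simp [hi', hj]
  by_cases hb : σ l = j
  · rw [hb, Equiv.swap_apply_right]; simp [hi', hj]
  rw [Equiv.swap_apply_of_ne_of_ne ha hb]

section prob
variable {Ω : Type*} [MeasurableSpace Ω] {P : Measure Ω} [IsProbabilityMeasure P]
  {μ : Measure ℝ} [IsProbabilityMeasure μ] {ι : Type*} [Fintype ι] {Y : ι → Ω → ℝ}

lemma map_iid (hmeas : ∀ i, Measurable (Y i)) (hlaw : ∀ i, P.map (Y i) = μ)
    (hindep : iIndepFun Y P) : P.map (fun ω i => Y i ω) = Measure.pi (fun _ : ι => μ) := by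
  rw [(iIndepFun_iff_map_fun_eq_pi_map (fun i => (hmeas i).aemeasurable)).1 hindep]
  simp [hlaw]

lemma rankEvent_exch (hmeas : ∀ i, Measurable (Y i)) (hlaw : ∀ i, P.map (Y i) = μ)
    (hindep : iIndepFun Y P) {i j : ι} {S T : Finset ι}
    (hc : S.card = T.card) (hi : i ∉ S) (hj : j ∉ T) :
    P.map (fun ω i => Y i ω) (rankEvent i S) = P.map (fun ω i => Y i ω) (rankEvent j T) := by
  obtain ⟨σ, hσ, hST⟩ := exists_perm hc hi hj
  have h2 : P.map (fun ω l => Y (σ l) ω) = Measure.pi (fun _ : ι => μ) :=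
    map_iid (Y := fun l => Y (σ l)) (fun _ => hmeas _) (fun _ => hlaw _)
      (hindep.precomp σ.injective)
  have h1 := map_iid hmeas hlaw hindep
  rw [show P.map (fun ω i => Y i ω) (rankEvent i S) =
      P.map (fun ω l => Y (σ l) ω) (rankEvent i S) by rw [h1, h2],
    Measure.map_apply (measurable_pi_lambda _ fun _ => hmeas _)
    (measurableSet_rankEvent _ _), Measure.map_apply (measurable_pi_lambda _ fun _ => hmeas _)
    (measurableSet_rankEvent _ _)]
  congr 1
  ext ω
  simp only [rankEvent, Set.mem_preimage, Set.mem_setOf_eq]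
  apply and_congr
  · exact σ.injective_comp (fun l => Y l ω)
  · simp only [belowSet, Finset.ext_iff, mem_filter, mem_univ, true_and]
    rw [← hσ, ← σ.forall_congr_right (q := fun l => Y l ω < Y (σ i) ω ↔ l ∈ T)]
    simp [hST]

lemma ae_inj [NullSingletonClass μ] (hmeas : ∀ i, Measurable (Y i))
    (hlaw : ∀ i, P.map (Y i) = μ)
    (hindep : iIndepFun Y P) : ∀ᵐ ω ∂P, Function.Injective (fun i => Y i ω) := by
  have : ∀ i j, ∀ᵐ ω ∂P, Y i ω = Y j ω → i = j := by
    intro i j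
    by_cases hij : i = j
    · simp [hij]
    have hd : MeasurableSet {p : ℝ × ℝ | p.1 = p.2} :=
      measurableSet_eq_fun measurable_fst measurable_snd
    have h0 : (μ.prod μ) {p : ℝ × ℝ | p.1 = p.2} = 0 := by
      rw [Measure.measure_prod_null hd]
      refine Filter.Eventually.of_forall fun x => ?_
      have : Prod.mk x ⁻¹' {p : ℝ × ℝ | p.1 = p.2} = {x} := by
        ext y; simp [eq_comm]
      change μ (Prod.mk x ⁻¹' {p : ℝ × ℝ | p.1 = p.2}) = 0
      rw [this]; simp
    have hp := (hindep.indepFun hij).map_prod_eq_prod_map_map (hmeas i).aemeasurable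
      (hmeas j).aemeasurable
    rw [hlaw, hlaw] at hp
    rw [← hp, Measure.map_apply ((hmeas i).prodMk (hmeas j)) hd] at h0
    rw [ae_iff]
    simpa [hij] using h0
  have h := ae_all_iff.2 fun i => ae_all_iff.2 (this i)
  filter_upwards [h] with ω hω
  intro i j hij
  exact hω i j hij

lemma rankEvent_prob [NullSingletonClass μ] (hmeas : ∀ i, Measurable (Y i))
    (hlaw : ∀ i, P.map (Y i) = μ)
    (hindep : iIndepFun Y P) {i : ι} {S : Finset ι} (hi : i ∉ S) :
    (Fintype.card ι * (Fintype.card ι - 1).choose S.card : ℕ) *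
      P.map (fun ω i => Y i ω) (rankEvent i S) = 1 := by
  classical
  have hY : Measurable (fun ω i => Y i ω) := measurable_pi_lambda _ fun _ => hmeas _
  have hprob : IsProbabilityMeasure (P.map (fun ω i => Y i ω)) :=
    Measure.isProbabilityMeasure_map hY.aemeasurable
  let I : Finset (Σ _ : ι, Finset ι) :=
    (Finset.univ : Finset ι).sigma fun i => Finset.powersetCard S.card (Finset.univ.erase i)
  have hI : I.card = Fintype.card ι * (Fintype.card ι - 1).choose S.card := by
    simp [I, Finset.card_sigma]
  have hU : P.map (fun ω i => Y i ω) (⋃ p ∈ I, rankEvent p.1 p.2) = 1 := by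
    rw [prob_compl_eq_zero_iff (Finset.measurableSet_biUnion _ fun p _ => measurableSet_rankEvent _ _)
      |>.symm]
    have := ae_inj hmeas hlaw hindep
    rw [Measure.map_apply hY
      (Finset.measurableSet_biUnion _ fun p _ => measurableSet_rankEvent _ _).compl]
    refine measure_mono_null ?_ (ae_iff.1 this)
    intro ω hω hinj
    apply hω
    obtain ⟨i', hi'⟩ := exists_belowSet_card hinj (Finset.card_lt_univ_of_notMem hi)
    simp only [Set.mem_iUnion]
    refine ⟨⟨i', belowSet (fun i => Y i ω) i'⟩, ?_, hinj, rfl⟩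
    simp only [I, mem_sigma, mem_univ, true_and, mem_powersetCard]
    refine ⟨?_, hi'⟩
    intro l hl
    simp only [belowSet, mem_filter, mem_univ, true_and, mem_erase, and_true] at *
    rintro rfl
    exact lt_irrefl _ hl
  rw [measure_biUnion_finset] at hU
  · rw [← hU, Finset.sum_congr rfl (g := fun _ => P.map (fun ω i => Y i ω) (rankEvent i S)),
      Finset.sum_const, hI, nsmul_eq_mul]
    intro p hp
    simp only [I, mem_sigma, mem_univ, true_and, mem_powersetCard] at hp
    exact rankEvent_exch hmeas hlaw hindep hp.2 (fun h => by simpa using hp.1 h) hi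
  · intro p hp q hq hpq
    simp only [I, Finset.mem_coe, mem_sigma, mem_univ, true_and, mem_powersetCard] at hp hq
    apply rankEvent_disjoint (by rw [hp.2, hq.2])
    rintro ⟨h1, h2⟩
    apply hpq
    cases p; cases q
    simp_all
  · exact fun p _ => measurableSet_rankEvent _ _

end prob

lemma count_prob {Ω : Type*} [MeasurableSpace Ω] {P : Measure Ω} [IsProbabilityMeasure P]
    {μ : Measure ℝ} [IsProbabilityMeasure μ] [NullSingletonClass μ] {n M k j : ℕ}
    (hk1 : 1 ≤ k) (hk : k ≤ n) (hj : j ≤ M)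
    {Y : Fin n ⊕ Fin M → Ω → ℝ} (hmeas : ∀ i, Measurable (Y i))
    (hlaw : ∀ i, P.map (Y i) = μ) (hindep : iIndepFun Y P) :
    (P {ω | (Finset.univ.filter (fun j' : Fin M => Y (Sum.inr j') ω ≤
      kthSmallest ((List.ofFn (fun i : Fin n => Y (Sum.inl i) ω) : List ℝ) : Multiset ℝ) k)).card
        = j}).toReal * ((n + M) * (n + M - 1).choose (k - 1 + j) : ℕ)
      = (n * ((n - 1).choose (k - 1) * M.choose j) : ℕ) := by
  have hY : Measurable (fun ω i => Y i ω) := measurable_pi_lambda _ fun _ => hmeas _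
  -- a reference configuration
  obtain ⟨p0, hp0⟩ : (goodSet n M k j).Nonempty := by
    rw [← Finset.card_pos, goodSet_card]
    have := Nat.choose_pos (n := n - 1) (k := k - 1) (by omega)
    have := Nat.choose_pos hj
    have : 0 < n := by omega
    positivity
  have hgood : ∀ p ∈ goodSet n M k j, (p.2.1.disjSum p.2.2).card = k - 1 + j ∧
      (Sum.inl p.1 : Fin n ⊕ Fin M) ∉ p.2.1.disjSum p.2.2 := by
    intro p hp
    simp only [goodSet, mem_sigma, mem_univ, true_and, mem_product, mem_powersetCard,
      subset_univ] at hp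
    refine ⟨by rw [Finset.card_disjSum, hp.1.2, hp.2], ?_⟩
    rw [Finset.inl_mem_disjSum]
    intro h
    simpa using hp.1.1 h
  set q := P.map (fun ω i => Y i ω) (rankEvent (Sum.inl p0.1) (p0.2.1.disjSum p0.2.2)) with hq
  have hq1 := rankEvent_prob hmeas hlaw hindep (hgood p0 hp0).2
  rw [(hgood p0 hp0).1, ← hq] at hq1
  simp only [Fintype.card_sum, Fintype.card_fin] at hq1
  have hev : P {ω | (Finset.univ.filter (fun j' : Fin M => Y (Sum.inr j') ω ≤
      kthSmallest ((List.ofFn (fun i : Fin n => Y (Sum.inl i) ω) : List ℝ) : Multiset ℝ) k)).card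
        = j} = P.map (fun ω i => Y i ω)
          (⋃ p ∈ goodSet n M k j, rankEvent (Sum.inl p.1) (p.2.1.disjSum p.2.2)) := by
    rw [Measure.map_apply hY
      (Finset.measurableSet_biUnion _ fun p _ => measurableSet_rankEvent _ _)]
    apply measure_congr
    filter_upwards [ae_inj hmeas hlaw hindep] with ω hω
    apply propext
    refine (count_eq_iff hk1 hk (fun i => Y i ω) hω).trans ?_
    change _ ↔ (fun i => Y i ω) ∈ _
    simp only [Set.mem_iUnion, rankEvent, Set.mem_setOf_eq, exists_prop, hω, true_and]
  rw [measure_biUnion_finset] at hev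
  · rw [Finset.sum_congr rfl (g := fun _ => q), Finset.sum_const, goodSet_card, nsmul_eq_mul] at hev
    · rw [hev, ← ENNReal.toReal_natCast ((n + M) * _), ← ENNReal.toReal_mul, mul_assoc,
        mul_comm q, hq1, mul_one, ENNReal.toReal_natCast]
    · intro p hp
      exact rankEvent_exch hmeas hlaw hindep (by rw [(hgood p hp).1, (hgood p0 hp0).1])
        (hgood p hp).2 (hgood p0 hp0).2
  · intro p hp q hq hpq
    apply rankEvent_disjoint (by rw [(hgood p hp).1, (hgood q hq).1])
    rintro ⟨h1, h2⟩
    apply hpq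
    obtain ⟨i, A, B⟩ := p
    obtain ⟨i', A', B'⟩ := q
    simp only [Sum.inl.injEq] at h1
    obtain ⟨h3, h4⟩ := Finset.disjSum_inj.1 h2
    simp only at h3 h4
    subst h1 h3 h4
    rfl
  · exact fun p _ => measurableSet_rankEvent _ _

lemma final_algebra (N M k j : ℕ) (hk1 : 1 ≤ k) (hkN : k ≤ N - 1) (hj : j ≤ M) (p : ℝ)
    (h : p * ((N - 1 + M) * (N - 1 + M - 1).choose (k - 1 + j) : ℕ)
      = ((N - 1) * ((N - 1 - 1).choose (k - 1) * M.choose j) : ℕ)) :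
    p = (M.choose j : ℝ) *
            Beta ((k : ℝ) + j) ((M : ℝ) - j + N - k) / Beta (k : ℝ) ((N : ℝ) - k) := by
  obtain ⟨c, rfl⟩ : ∃ c, k = c + 1 := ⟨k - 1, by omega⟩
  obtain ⟨m, rfl⟩ : ∃ m, N = c + 1 + m + 1 := ⟨N - 1 - (c + 1), by omega⟩
  obtain ⟨d, rfl⟩ : ∃ d, M = j + d := ⟨M - j, by omega⟩
  have e1 : ((c + 1 : ℕ) : ℝ) + j = ((c + j : ℕ) : ℝ) + 1 := by push_cast; ring
  have e2 : ((j + d : ℕ) : ℝ) - j + (c + 1 + m + 1 : ℕ) - (c + 1 : ℕ) = ((d + m : ℕ) : ℝ) + 1 := by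
    push_cast; ring
  have e3 : ((c + 1 + m + 1 : ℕ) : ℝ) - (c + 1 : ℕ) = (m : ℝ) + 1 := by push_cast; ring
  have e4 : ((c + 1 : ℕ) : ℝ) = (c : ℝ) + 1 := by push_cast; ring
  rw [e1, e2, e3, e4, Beta_nat, Beta_nat]
  have f1 : c + 1 + m + 1 - 1 + (j + d) = c + j + (d + m) + 1 := by omega
  have f2 : c + j + (d + m) + 1 - 1 = c + j + (d + m) := by omega
  have f3 : c + 1 + m + 1 - 1 = c + m + 1 := by omega
  rw [f1, f2, f3, Nat.add_sub_cancel, Nat.add_sub_cancel] at h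
  push_cast [Nat.add_choose] at h
  rw [Nat.cast_add_choose, Nat.cast_add_choose] at h
  rw [Nat.factorial_succ (c + j + (d + m)), Nat.factorial_succ (c + m)]
  have g1 : ((c + j).factorial : ℝ) ≠ 0 := by positivity
  have g2 : ((d + m).factorial : ℝ) ≠ 0 := by positivity
  have g3 : ((c + j + (d + m)).factorial : ℝ) ≠ 0 := by positivity
  have g4 : ((c + m).factorial : ℝ) ≠ 0 := by positivity
  have g5 : (c.factorial : ℝ) ≠ 0 := by positivity
  have g6 : (m.factorial : ℝ) ≠ 0 := by positivity
  have g7 : (c + j + (d + m) + 1 : ℝ) ≠ 0 := by positivity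
  have g8 : (c + m + 1 : ℝ) ≠ 0 := by positivity
  push_cast
  field_simp
  field_simp at h
  linarith

/-- Central distributional claim in the proof of Lemma 1: with `Z_1, …, Z_{N-1+M}` i.i.d.
from an atomless real law, `R` the `k`-th smallest of `Z_1, …, Z_{N-1}` and
`C = #{j ≤ M : Z_{N-1+j} ≤ R}`, the count `C` follows the Beta-Binomial(M, k, N − k)
distribution. -/
theorem count_below_kth_order_statistic_betaBinomial
    {Ω : Type*} [MeasurableSpace Ω] (P : Measure Ω) [IsProbabilityMeasure P]
    (μ : Measure ℝ) [IsProbabilityMeasure μ] [NullSingletonClass μ]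
    (N M k : ℕ) (hk1 : 1 ≤ k) (hkN : k ≤ N - 1)
    (Z : Fin (N - 1 + M) → Ω → ℝ)
    (hmeas : ∀ i, Measurable (Z i))
    (hlaw : ∀ i, P.map (Z i) = μ)
    (hindep : iIndepFun Z P) :
    ∀ j : ℕ, j ≤ M →
      (P {ω | (Finset.univ.filter (fun j' : Fin M =>
          Z (Fin.natAdd (N - 1) j') ω ≤
            kthSmallest
              ((List.ofFn (fun i : Fin (N - 1) => Z (Fin.castAdd M i) ω)) : Multiset ℝ)
              k)).card = j}).toReal
        = (M.choose j : ℝ) *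
            Beta ((k : ℝ) + j) ((M : ℝ) - j + N - k) / Beta (k : ℝ) ((N : ℝ) - k) := by
  intro j hj
  apply final_algebra N M k j hk1 hkN hj
  have h := count_prob (P := P) (μ := μ) (n := N - 1) (M := M) (k := k) (j := j) hk1 hkN hj
    (Y := fun s => Z (finSumFinEquiv s)) (fun _ => hmeas _) (fun _ => hlaw _)
    (hindep.precomp finSumFinEquiv.injective)
  exact h
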